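/- (Proposition 1, full equivalence of the constrained and penalized problems under strict inequality.) Let d : ℕ, let S be a score function on binary adjacency matrices of size d, let S* be the minimum of S over acyclic binary adjacency matrices, and let hmin > 0 satisfy hmin ≤ h(A) for every non-acyclic binary adjacency matrix A. Assume S_L ≤ S(A) for every binary adjacency matrix A, S* ≤ S_U, λ1 ≥ 0, λ2 ≥ 0 and λ1 + λ2·hmin > S_U − S_L. Then for every binary adjacency matrix A: A is acyclic and S(A) = S* if and only if A minimizes the penalized objective F over all binary adjacency matrices. -/

import Mathlib

/-!
On an acyclic binary matrix every diagonal entry of a positive power vanishes, since a nonzero one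
would come from a closed walk; so `tr (exp A) = d` and the penalized objective equals the score.
On any other binary matrix the objective is at least `S_L + λ₁ + λ₂ * hmin > S_U ≥ S*`. Hence every
minimizer of the penalized objective is acyclic, and therefore a minimizer of the score.
-/

/-- A binary adjacency matrix: every entry is 0 or 1. -/
def IsBinary {d : ℕ} (A : Matrix (Fin d) (Fin d) ℝ) : Prop :=
  ∀ i j, A i j = 0 ∨ A i j = 1

/-- The directed graph induced by `A` (edge `i → j` iff `A i j = 1`) is acyclic. -/
def IsAcyclicMat {d : ℕ} (A : Matrix (Fin d) (Fin d) ℝ) : Prop :=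
  Irreflexive (Relation.TransGen (fun i j => A i j = 1))

/-- The smooth acyclicity function `h(A) = trace (exp A) - d`. -/
noncomputable def hAcyc {d : ℕ} (A : Matrix (Fin d) (Fin d) ℝ) : ℝ :=
  Matrix.trace (NormedSpace.exp A) - d

open Classical in
/-- The penalized objective `F(A) = S(A) + λ₁·1[A ∉ DAGs] + λ₂·h(A)`. -/
noncomputable def penObj {d : ℕ} (S : Matrix (Fin d) (Fin d) ℝ → ℝ) (lam1 lam2 : ℝ)
    (A : Matrix (Fin d) (Fin d) ℝ) : ℝ :=
  S A + lam1 * (if IsAcyclicMat A then (0 : ℝ) else 1) + lam2 * hAcyc A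

theorem isMinOn_iff_of_eqOn_of_lt {α β : Type*} [PartialOrder β] {f F : α → β} {s t : Set α}
    {m : β} {a : α} (hts : t ⊆ s) (hm : IsLeast (f '' t) m) (heq : Set.EqOn F f t)
    (hlt : ∀ x ∈ s \ t, m < F x) (ha : a ∈ s) : IsMinOn F s a ↔ a ∈ t ∧ f a = m := by
  constructor
  · intro hmin
    obtain ⟨b, hb, rfl⟩ := hm.1
    have hab : F a ≤ f b := heq hb ▸ hmin (hts hb)
    have hat : a ∈ t := by_contra fun hat => (hlt a ⟨ha, hat⟩).not_ge hab
    exact ⟨hat, le_antisymm (heq hat ▸ hab) (hm.2 ⟨a, hat, rfl⟩)⟩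
  · rintro ⟨hat, rfl⟩ x hx
    change F a ≤ F x
    rw [heq hat]
    by_cases hxt : x ∈ t
    · exact heq hxt ▸ hm.2 ⟨x, hxt, rfl⟩
    · exact (hlt x ⟨hx, hxt⟩).le

section Matrix

open Relation (TransGen)

variable {n : Type*} [Fintype n] [DecidableEq n]

theorem transGen_of_pow_apply_ne_zero {R : Type*} [Semiring R] {A : Matrix n n R} {k : ℕ}
    (hk : k ≠ 0) {i j : n} (h : (A ^ k) i j ≠ 0) : TransGen (fun i j => A i j ≠ 0) i j := by
  induction k, Nat.one_le_iff_ne_zero.mpr hk using Nat.le_induction generalizing j with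
  | base => exact .single (by rwa [pow_one] at h)
  | succ k hk ih =>
    rw [pow_succ, Matrix.mul_apply] at h
    obtain ⟨l, -, hl⟩ := Finset.exists_ne_zero_of_sum_ne_zero h
    exact (ih (by lia) (left_ne_zero_of_mul hl)).tail (right_ne_zero_of_mul hl)

theorem trace_pow_eq_zero_of_not_transGen_self {R : Type*} [Semiring R] {A : Matrix n n R}
    (hA : ∀ i, ¬ TransGen (fun i j => A i j ≠ 0) i i) {k : ℕ} (hk : k ≠ 0) :
    (A ^ k).trace = 0 :=
  Finset.sum_eq_zero fun i _ => by_contra fun h => hA i (transGen_of_pow_apply_ne_zero hk h)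

variable {𝔸 : Type*} [NormedRing 𝔸] [NormedAlgebra ℚ 𝔸] [CompleteSpace 𝔸]

theorem hasSum_matrix_exp (A : Matrix n n 𝔸) :
    HasSum (fun k : ℕ => (k.factorial⁻¹ : ℚ) • A ^ k) (NormedSpace.exp A) := by
  open scoped Matrix.Norms.Operator in
  -- The uniformity of the operator norm is the entrywise one, but instance search does not see it.
  have : @CompleteSpace (Matrix n n 𝔸) PseudoMetricSpace.toUniformSpace :=
    Matrix.instCompleteSpace n n 𝔸
  exact NormedSpace.exp_series_hasSum_exp' A

theorem hasSum_trace_exp (A : Matrix n n 𝔸) :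
    HasSum (fun k : ℕ => (k.factorial⁻¹ : ℚ) • (A ^ k).trace) (NormedSpace.exp A).trace := by
  simpa only [Function.comp_def, Matrix.traceAddMonoidHom_apply, Matrix.trace_smul] using
    (hasSum_matrix_exp A).map (Matrix.traceAddMonoidHom n 𝔸) continuous_id.matrix_trace

theorem trace_exp_eq_card_of_trace_pow_eq_zero {A : Matrix n n 𝔸}
    (hA : ∀ k ≠ 0, (A ^ k).trace = 0) : (NormedSpace.exp A).trace = Fintype.card n := by
  refine (hasSum_trace_exp A).unique ?_
  simpa using hasSum_single (f := fun k : ℕ => (k.factorial⁻¹ : ℚ) • (A ^ k).trace) 0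
    fun k hk => by rw [hA k hk, smul_zero]

end Matrix

section AcyclicityPenalty

variable {d : ℕ} {A : Matrix (Fin d) (Fin d) ℝ}

theorem IsBinary.ne_zero_iff (hA : IsBinary A) (i j : Fin d) : A i j ≠ 0 ↔ A i j = 1 :=
  ⟨(hA i j).resolve_left, fun h => h ▸ one_ne_zero⟩

theorem IsBinary.hAcyc_eq_zero (hA : IsBinary A) (hacyc : IsAcyclicMat A) : hAcyc A = 0 := by
  have hsupp : ∀ i, ¬ Relation.TransGen (fun i j => A i j ≠ 0) i i := by
    simpa only [hA.ne_zero_iff] using! hacyc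
  rw [hAcyc, trace_exp_eq_card_of_trace_pow_eq_zero
    fun _ => trace_pow_eq_zero_of_not_transGen_self hsupp, Fintype.card_fin, sub_self]

variable (S : Matrix (Fin d) (Fin d) ℝ → ℝ) (lam1 lam2 : ℝ)

theorem IsBinary.penObj_of_isAcyclicMat (hA : IsBinary A) (hacyc : IsAcyclicMat A) :
    penObj S lam1 lam2 A = S A := by
  rw [penObj, if_pos hacyc, hA.hAcyc_eq_zero hacyc, mul_zero, mul_zero, add_zero, add_zero]

theorem le_penObj_of_not_isAcyclicMat {SL hmin : ℝ} (hlam2 : 0 ≤ lam2) (hcyc : ¬ IsAcyclicMat A)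
    (hS : SL ≤ S A) (hh : hmin ≤ hAcyc A) : SL + lam1 + lam2 * hmin ≤ penObj S lam1 lam2 A := by
  rw [penObj, if_neg hcyc, mul_one]
  gcongr

end AcyclicityPenalty

theorem prop1_equiv (d : ℕ) (S : Matrix (Fin d) (Fin d) ℝ → ℝ)
    (Sstar SL SU hmin lam1 lam2 : ℝ)
    (hSstar : IsLeast {s : ℝ | ∃ A : Matrix (Fin d) (Fin d) ℝ,
        IsBinary A ∧ IsAcyclicMat A ∧ S A = s} Sstar)
    (hminpos : 0 < hmin)
    (hminle : ∀ A : Matrix (Fin d) (Fin d) ℝ, IsBinary A → ¬ IsAcyclicMat A → hmin ≤ hAcyc A)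
    (hSL : ∀ A : Matrix (Fin d) (Fin d) ℝ, IsBinary A → SL ≤ S A)
    (hSU : Sstar ≤ SU)
    (hl1 : 0 ≤ lam1) (hl2 : 0 ≤ lam2)
    (hpen : SU - SL < lam1 + lam2 * hmin) :
    ∀ A : Matrix (Fin d) (Fin d) ℝ, IsBinary A →
      ((IsAcyclicMat A ∧ S A = Sstar) ↔
        (∀ A' : Matrix (Fin d) (Fin d) ℝ, IsBinary A' →
          penObj S lam1 lam2 A ≤ penObj S lam1 lam2 A')) := by
  intro A hA
  have hgap : ∀ B ∈ {B | IsBinary B} \ {B | IsBinary B ∧ IsAcyclicMat B},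
      Sstar < penObj S lam1 lam2 B := by
    rintro B ⟨hB, hBt⟩
    have hcyc : ¬ IsAcyclicMat B := fun h => hBt ⟨hB, h⟩
    have hbound := le_penObj_of_not_isAcyclicMat S lam1 lam2 hl2 hcyc (hSL B hB) (hminle B hB hcyc)
    linarith
  have hleast : IsLeast (S '' {B | IsBinary B ∧ IsAcyclicMat B}) Sstar := by
    simpa only [Set.image, Set.mem_ofPred_eq, and_assoc] using hSstar
  have hiff := isMinOn_iff_of_eqOn_of_lt (fun _ hB => hB.1) hleast
    (fun _ hB => hB.1.penObj_of_isAcyclicMat S lam1 lam2 hB.2) hgap hA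
  simpa only [Set.mem_ofPred_eq, hA, true_and, isMinOn_iff] using hiff.symm
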